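/- Let F : ℝ^d → ℝ be differentiable with L-Lipschitz gradient, let M ∈ {0,1}^d be a binary mask, let (Ω, μ) be a probability space, and let g : Ω × ℝ^d → ℝ^d satisfy 𝔼_{x∼μ}[g(x, W)] = ∇F(W) and 𝔼_{x∼μ}[‖g(x, W) − ∇F(W)‖²] ≤ σ² for all W. For a masked SGD step W' = W − α · g(x, W) ⊙ M with step size α > 0 and x ∼ μ, the expected loss satisfies 𝔼[F(W')] ≤ F(W) − α‖∇F(W) ⊙ M‖² + (L·α²/2)·(‖∇F(W) ⊙ M‖² + σ²). -/

import Mathlib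

open MeasureTheory

noncomputable section

/-- Componentwise (Hadamard) product on `ℝ^d`. -/
def had {d : ℕ} (v w : EuclideanSpace ℝ (Fin d)) : EuclideanSpace ℝ (Fin d) :=
  WithLp.toLp 2 (fun i => v i * w i)

/-- A binary mask is a vector with entries in `{0,1}`. -/
def IsBinaryMask {d : ℕ} (M : EuclideanSpace ℝ (Fin d)) : Prop :=
  ∀ i, M i = 0 ∨ M i = 1

/-!
By the quadratic Taylor bound, `𝔼 F(W + Z) ≤ F(W) + ⟪∇F(W), 𝔼 Z⟫ + (L/2) 𝔼‖Z‖²` for every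
square-integrable step `Z`. Take `Z = -α T Y`, where `Y` is the stochastic gradient and `T` is the
masking operator. Beyond linearity, only `‖T v‖² ≤ ⟪v, T v⟫` matters: it bounds the first-order term
directly, and by Cauchy–Schwarz it makes `T` a contraction, so the second moment
`𝔼‖T Y‖² = ‖T ∇F(W)‖² + 𝔼‖T (Y - ∇F(W))‖²` is at most `‖T ∇F(W)‖² + σ²`.
-/

open scoped NNReal

theorem lipschitzWith_of_norm_add_sub_le {E G : Type*} [SeminormedAddCommGroup E]
    [SeminormedAddCommGroup G] {f : E → G} {L : ℝ} (hL : 0 ≤ L)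
    (h : ∀ x v, ‖f (x + v) - f x‖ ≤ L * ‖v‖) : LipschitzWith ⟨L, hL⟩ f :=
  LipschitzWith.of_dist_le_mul fun x y => by
    simpa only [dist_eq_norm, add_sub_cancel] using! h y (x - y)

section Taylor

variable {E G : Type*} [NormedAddCommGroup E] [NormedSpace ℝ E] [NormedAddCommGroup G]
  [NormedSpace ℝ G]

theorem norm_add_sub_sub_fderiv_le_of_lipschitzWith {f : E → G} {K : ℝ≥0}
    (hf : Differentiable ℝ f) (hLip : LipschitzWith K (fderiv ℝ f)) (x v : E) :
    ‖f (x + v) - f x - fderiv ℝ f x v‖ ≤ K / 2 * ‖v‖ ^ 2 := by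
  let remainder (t : ℝ) : G := f (x + t • v) - f x - t • fderiv ℝ f x v
  have hasDerivAt_remainder (t : ℝ) :
      HasDerivAt remainder (fderiv ℝ f (x + t • v) v - fderiv ℝ f x v) t := by
    have hline : HasDerivAt (fun t : ℝ => x + t • v) v t := by
      simpa using ((hasDerivAt_id t).smul_const v).const_add x
    have hlinear : HasDerivAt (fun t : ℝ => t • fderiv ℝ f x v) (fderiv ℝ f x v) t := by
      simpa using (hasDerivAt_id t).smul_const (fderiv ℝ f x v)
    exact (((hf _).hasFDerivAt.comp_hasDerivAt t hline).sub_const (f x)).sub hlinear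
  have hasDerivAt_bound (t : ℝ) :
      HasDerivAt (fun t => K / 2 * ‖v‖ ^ 2 * t ^ 2) (K * ‖v‖ ^ 2 * t) t := by
    convert! (hasDerivAt_pow 2 t).const_mul (K / 2 * ‖v‖ ^ 2) using 1
    push_cast
    ring
  have norm_deriv_le (t : ℝ) (ht : t ∈ Set.Ico (0 : ℝ) 1) :
      ‖fderiv ℝ f (x + t • v) v - fderiv ℝ f x v‖ ≤ K * ‖v‖ ^ 2 * t :=
    calc ‖(fderiv ℝ f (x + t • v) - fderiv ℝ f x) v‖
        ≤ ‖fderiv ℝ f (x + t • v) - fderiv ℝ f x‖ * ‖v‖ := ContinuousLinearMap.le_opNorm _ _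
      _ ≤ K * ‖x + t • v - x‖ * ‖v‖ := by gcongr; exact hLip.norm_sub_le _ _
      _ = K * ‖v‖ ^ 2 * t := by
        rw [add_sub_cancel_left, norm_smul, Real.norm_of_nonneg ht.1]
        ring
  have hbound := image_norm_le_of_norm_deriv_right_le_deriv_boundary
    (fun t _ => (hasDerivAt_remainder t).continuousAt.continuousWithinAt)
    (fun t _ => (hasDerivAt_remainder t).hasDerivWithinAt)
    (by simp [remainder]) hasDerivAt_bound norm_deriv_le (Set.right_mem_Icc.2 zero_le_one)
  simpa [remainder] using hbound

variable {Ω : Type*} [MeasurableSpace Ω] {μ : Measure Ω} [IsFiniteMeasure μ]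

theorem integrable_comp_const_add_of_lipschitzWith_fderiv {f : E → G} {K : ℝ≥0}
    (hf : Differentiable ℝ f) (hLip : LipschitzWith K (fderiv ℝ f)) {Z : Ω → E}
    (hZ : MemLp Z 2 μ) (x : E) : Integrable (fun ω => f (x + Z ω)) μ := by
  have hmeas : AEStronglyMeasurable (fun ω => f (x + Z ω)) μ :=
    hf.continuous.comp_aestronglyMeasurable (hZ.aestronglyMeasurable.const_add x)
  have haffine : Integrable (fun ω => f x + fderiv ℝ f x (Z ω)) μ :=
    (integrable_const _).add ((fderiv ℝ f x).integrable_comp (hZ.integrable one_le_two))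
  have hremainder : Integrable (fun ω => f (x + Z ω) - (f x + fderiv ℝ f x (Z ω))) μ := by
    refine (hZ.norm.integrable_sq.const_mul (K / 2 : ℝ)).mono'
      (hmeas.sub haffine.aestronglyMeasurable) (.of_forall fun ω => ?_)
    rw [← sub_sub]
    exact norm_add_sub_sub_fderiv_le_of_lipschitzWith hf hLip x (Z ω)
  simpa only [sub_add_cancel] using hremainder.fun_add haffine

end Taylor

section SecondMoment

variable {Ω : Type*} [MeasurableSpace Ω] {μ : Measure Ω}

theorem memLp_two_of_integrable_sq_norm_sub_const [IsFiniteMeasure μ] {E : Type*}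
    [NormedAddCommGroup E] {Y : Ω → E} {c : E}
    (hY : AEStronglyMeasurable Y μ) (h : Integrable (fun ω => ‖Y ω - c‖ ^ 2) μ) :
    MemLp Y 2 μ := by
  have hcentered : MemLp (fun ω => Y ω - c) 2 μ :=
    (memLp_two_iff_integrable_sq_norm (hY.sub aestronglyMeasurable_const)).2 h
  exact (hcentered.add (memLp_const c)).ae_eq (.of_forall fun ω => sub_add_cancel (Y ω) c)

variable [IsProbabilityMeasure μ] {E G : Type*} [NormedAddCommGroup E] [InnerProductSpace ℝ E]
  [CompleteSpace E] [NormedAddCommGroup G] [InnerProductSpace ℝ G] [CompleteSpace G]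

theorem integral_norm_sq_eq_norm_integral_sq_add {Y : Ω → E} (hY : MemLp Y 2 μ) :
    ∫ ω, ‖Y ω‖ ^ 2 ∂μ =
      ‖∫ ω, Y ω ∂μ‖ ^ 2 + ∫ ω, ‖Y ω - ∫ ω', Y ω' ∂μ‖ ^ 2 ∂μ := by
  set m := ∫ ω, Y ω ∂μ with hm
  have hY_int : Integrable Y μ := hY.integrable one_le_two
  have hcentered : MemLp (fun ω => Y ω - m) 2 μ := hY.sub (memLp_const m)
  have hcentered_int : Integrable (fun ω => Y ω - m) μ := hcentered.integrable one_le_two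
  have hcross_int : Integrable (fun ω => 2 * inner ℝ m (Y ω - m)) μ :=
    (hcentered_int.const_inner m).const_mul 2
  have hcross : ∫ ω, 2 * inner ℝ m (Y ω - m) ∂μ = 0 := by
    rw [integral_const_mul, integral_inner hcentered_int,
      integral_sub hY_int (integrable_const m), ← hm]
    simp
  calc ∫ ω, ‖Y ω‖ ^ 2 ∂μ
      = ∫ ω, (‖m‖ ^ 2 + 2 * inner ℝ m (Y ω - m) + ‖Y ω - m‖ ^ 2) ∂μ := by
        simp only [← norm_add_sq_real, add_sub_cancel]
    _ = ‖m‖ ^ 2 + ∫ ω, ‖Y ω - m‖ ^ 2 ∂μ := by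
        rw [integral_add ((integrable_const _).fun_add hcross_int) hcentered.norm.integrable_sq,
          integral_add (integrable_const _) hcross_int, hcross]
        simp

theorem integral_norm_sq_map_le_of_contraction {T : E →L[ℝ] G} (hT : ∀ v, ‖T v‖ ≤ ‖v‖)
    {Y : Ω → E} (hY : MemLp Y 2 μ) :
    ∫ ω, ‖T (Y ω)‖ ^ 2 ∂μ ≤
      ‖T (∫ ω, Y ω ∂μ)‖ ^ 2 + ∫ ω, ‖Y ω - ∫ ω', Y ω' ∂μ‖ ^ 2 ∂μ := by
  set m := ∫ ω, Y ω ∂μ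
  have hTY : MemLp (fun ω => T (Y ω)) 2 μ := T.comp_memLp' hY
  have hcentered : MemLp (fun ω => Y ω - m) 2 μ := hY.sub (memLp_const m)
  have hmean : ∫ ω, T (Y ω) ∂μ = T m := T.integral_comp_comm (hY.integrable one_le_two)
  calc ∫ ω, ‖T (Y ω)‖ ^ 2 ∂μ
      = ‖T m‖ ^ 2 + ∫ ω, ‖T (Y ω - m)‖ ^ 2 ∂μ := by
        rw [integral_norm_sq_eq_norm_integral_sq_add hTY, hmean]
        simp only [map_sub]
    _ ≤ ‖T m‖ ^ 2 + ∫ ω, ‖Y ω - m‖ ^ 2 ∂μ :=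
        add_le_add_right (integral_mono (T.comp_memLp' hcentered).norm.integrable_sq
          hcentered.norm.integrable_sq fun ω => pow_le_pow_left₀ (norm_nonneg _) (hT _) 2) _

end SecondMoment

theorem norm_le_of_norm_sq_le_inner {E : Type*} [SeminormedAddCommGroup E]
    [InnerProductSpace ℝ E] {u v : E} (h : ‖u‖ ^ 2 ≤ inner ℝ v u) : ‖u‖ ≤ ‖v‖ := by
  have hCauchySchwarz : ‖u‖ * ‖u‖ ≤ ‖v‖ * ‖u‖ :=
    (sq ‖u‖).symm.trans_le (h.trans (real_inner_le_norm v u))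
  rcases (norm_nonneg u).eq_or_lt with hzero | hpos
  · exact hzero ▸ norm_nonneg v
  · exact le_of_mul_le_mul_right hCauchySchwarz hpos

section Descent

variable {E : Type*} [NormedAddCommGroup E] [InnerProductSpace ℝ E] [CompleteSpace E]
  {F : E → ℝ} {K : ℝ≥0}
  {Ω : Type*} [MeasurableSpace Ω] {μ : Measure Ω} [IsProbabilityMeasure μ]

theorem lipschitzWith_fderiv_of_lipschitzWith_gradient (hLip : LipschitzWith K (gradient F)) :
    LipschitzWith K (fderiv ℝ F) := by
  rw [← toDual_comp_gradient, ← one_mul K]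
  exact (InnerProductSpace.toDual ℝ E).lipschitz.comp hLip

theorem apply_add_le_of_lipschitzWith_gradient (hF : Differentiable ℝ F)
    (hLip : LipschitzWith K (gradient F)) (x v : E) :
    F (x + v) ≤ F x + inner ℝ (gradient F x) v + K / 2 * ‖v‖ ^ 2 := by
  have hremainder := (le_abs_self _).trans <| norm_add_sub_sub_fderiv_le_of_lipschitzWith hF
    (lipschitzWith_fderiv_of_lipschitzWith_gradient hLip) x v
  rw [← toDual_gradient, InnerProductSpace.toDual_apply_apply] at hremainder
  linarith

theorem integral_apply_add_le_of_lipschitzWith_gradient (hF : Differentiable ℝ F)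
    (hLip : LipschitzWith K (gradient F)) {Z : Ω → E} (hZ : MemLp Z 2 μ) (x : E) :
    ∫ ω, F (x + Z ω) ∂μ ≤
      F x + inner ℝ (gradient F x) (∫ ω, Z ω ∂μ) + K / 2 * ∫ ω, ‖Z ω‖ ^ 2 ∂μ := by
  have hZ_int : Integrable Z μ := hZ.integrable one_le_two
  have hlinear : Integrable (fun ω => F x + inner ℝ (gradient F x) (Z ω)) μ :=
    (integrable_const _).add (hZ_int.const_inner _)
  have hsquare : Integrable (fun ω => K / 2 * ‖Z ω‖ ^ 2) μ := hZ.norm.integrable_sq.const_mul _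
  calc ∫ ω, F (x + Z ω) ∂μ
      ≤ ∫ ω, (F x + inner ℝ (gradient F x) (Z ω) + K / 2 * ‖Z ω‖ ^ 2) ∂μ :=
        integral_mono
          (integrable_comp_const_add_of_lipschitzWith_fderiv hF
            (lipschitzWith_fderiv_of_lipschitzWith_gradient hLip) hZ x)
          (hlinear.add hsquare)
          fun ω => apply_add_le_of_lipschitzWith_gradient hF hLip x (Z ω)
    _ = F x + inner ℝ (gradient F x) (∫ ω, Z ω ∂μ) + K / 2 * ∫ ω, ‖Z ω‖ ^ 2 ∂μ := by
        rw [integral_add hlinear hsquare,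
          integral_add (integrable_const _) (hZ_int.const_inner _), integral_const,
          integral_inner hZ_int, integral_const_mul, probReal_univ, one_smul]

/-- The mask becomes an operator `T` with `‖T v‖² ≤ ⟪v, T v⟫`, for instance an orthogonal projection
or a soft mask with weights in `[0, 1]`. -/
theorem stmt_4_general (hF : Differentiable ℝ F) (hLip : LipschitzWith K (gradient F))
    {T : E →L[ℝ] E} (hT : ∀ v, ‖T v‖ ^ 2 ≤ inner ℝ v (T v)) {Y : Ω → E} (hY : MemLp Y 2 μ)
    {W : E} (hmean : ∫ ω, Y ω ∂μ = gradient F W) {σ α : ℝ} (hα : 0 ≤ α)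
    (hnoise : ∫ ω, ‖Y ω - gradient F W‖ ^ 2 ∂μ ≤ σ ^ 2) :
    ∫ ω, F (W - α • T (Y ω)) ∂μ ≤
      F W - α * ‖T (gradient F W)‖ ^ 2
        + (K * α ^ 2 / 2) * (‖T (gradient F W)‖ ^ 2 + σ ^ 2) := by
  have hstep : MemLp (fun ω => -α • T (Y ω)) 2 μ := (T.comp_memLp' hY).const_smul (-α)
  have hmean_step : ∫ ω, -α • T (Y ω) ∂μ = -α • T (gradient F W) := by
    rw [integral_smul, T.integral_comp_comm (hY.integrable one_le_two), hmean]
  have hsecond_moment : ∫ ω, ‖T (Y ω)‖ ^ 2 ∂μ ≤ ‖T (gradient F W)‖ ^ 2 + σ ^ 2 := by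
    have h := integral_norm_sq_map_le_of_contraction
      (fun v => norm_le_of_norm_sq_le_inner (hT v)) hY
    rw [hmean] at h
    exact h.trans (by gcongr)
  calc ∫ ω, F (W - α • T (Y ω)) ∂μ
      = ∫ ω, F (W + -α • T (Y ω)) ∂μ := by simp only [neg_smul, sub_eq_add_neg]
    _ ≤ F W + inner ℝ (gradient F W) (-α • T (gradient F W))
          + K / 2 * ∫ ω, ‖-α • T (Y ω)‖ ^ 2 ∂μ := by
        rw [← hmean_step]
        exact integral_apply_add_le_of_lipschitzWith_gradient hF hLip hstep W
    _ = F W - α * inner ℝ (gradient F W) (T (gradient F W))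
          + (K * α ^ 2 / 2) * ∫ ω, ‖T (Y ω)‖ ^ 2 ∂μ := by
        simp only [norm_smul, mul_pow, norm_neg, Real.norm_eq_abs, sq_abs, integral_const_mul,
          real_inner_smul_right]
        ring
    _ ≤ F W - α * ‖T (gradient F W)‖ ^ 2
          + (K * α ^ 2 / 2) * (‖T (gradient F W)‖ ^ 2 + σ ^ 2) := by
        gcongr
        exact hT _

end Descent

section Mask

variable {d : ℕ} {M : EuclideanSpace ℝ (Fin d)}

/-- Masking by `M`, the map `v ↦ v ⊙ M`, as a continuous linear operator, so that it commutes with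
expectations. -/
def hadRightCLM (M : EuclideanSpace ℝ (Fin d)) :
    EuclideanSpace ℝ (Fin d) →L[ℝ] EuclideanSpace ℝ (Fin d) :=
  LinearMap.toContinuousLinearMap
    { toFun := fun v => had v M
      map_add' := fun v w => by ext i; simp [had, add_mul]
      map_smul' := fun c v => by ext i; simp [had, mul_assoc] }

theorem norm_sq_had_le_inner (hM : ∀ i, M i ∈ Set.Icc (0 : ℝ) 1) (v : EuclideanSpace ℝ (Fin d)) :
    ‖had v M‖ ^ 2 ≤ inner ℝ v (had v M) := by
  rw [EuclideanSpace.real_norm_sq_eq, PiLp.inner_apply]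
  refine Finset.sum_le_sum fun i _ => ?_
  calc (v i * M i) ^ 2 = v i ^ 2 * M i * M i := by ring
    _ ≤ v i ^ 2 * M i * 1 := by
        have := (hM i).1
        gcongr
        exact (hM i).2
    _ = inner ℝ (v i) (v i * M i) := by
        simp only [RCLike.inner_apply, conj_trivial]
        ring

theorem IsBinaryMask.mem_Icc (hM : IsBinaryMask M) (i : Fin d) : M i ∈ Set.Icc (0 : ℝ) 1 := by
  rcases hM i with h | h <;> simp [h]

end Mask

/-- Per-step descent estimate for masked stochastic gradient descent:
for the step `W' = W − α · g(x, W) ⊙ M` with `x ∼ μ`,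
`𝔼[F(W')] ≤ F(W) − α‖∇F(W) ⊙ M‖² + (Lα²/2)(‖∇F(W) ⊙ M‖² + σ²)`. -/
theorem stmt_4 {d : ℕ} (F : EuclideanSpace ℝ (Fin d) → ℝ) (L σ α : ℝ)
    (hL : 0 < L) (hα : 0 < α)
    (hdiff : Differentiable ℝ F)
    (hLip : ∀ W h : EuclideanSpace ℝ (Fin d),
      ‖gradient F (W + h) - gradient F W‖ ≤ L * ‖h‖)
    (M : EuclideanSpace ℝ (Fin d)) (hM : IsBinaryMask M)
    (Ω : Type) [MeasurableSpace Ω] (μ : Measure Ω) [IsProbabilityMeasure μ]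
    (g : Ω → EuclideanSpace ℝ (Fin d) → EuclideanSpace ℝ (Fin d))
    (hgInt : ∀ W : EuclideanSpace ℝ (Fin d), Integrable (fun x => g x W) μ)
    (hUnbiased : ∀ W : EuclideanSpace ℝ (Fin d), ∫ x, g x W ∂μ = gradient F W)
    (hNoiseInt : ∀ W : EuclideanSpace ℝ (Fin d),
      Integrable (fun x => ‖g x W - gradient F W‖ ^ 2) μ)
    (hNoise : ∀ W : EuclideanSpace ℝ (Fin d),
      ∫ x, ‖g x W - gradient F W‖ ^ 2 ∂μ ≤ σ ^ 2)
    (W : EuclideanSpace ℝ (Fin d))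
    (hFInt : Integrable (fun x => F (W - α • had (g x W) M)) μ) :
    ∫ x, F (W - α • had (g x W) M) ∂μ ≤
      F W - α * ‖had (gradient F W) M‖ ^ 2
        + (L * α ^ 2 / 2) * (‖had (gradient F W) M‖ ^ 2 + σ ^ 2) :=
  stmt_4_general (T := hadRightCLM M) hdiff (lipschitzWith_of_norm_add_sub_le hL.le hLip)
    (norm_sq_had_le_inner hM.mem_Icc)
    (memLp_two_of_integrable_sq_norm_sub_const (hgInt W).aestronglyMeasurable (hNoiseInt W))
    (hUnbiased W) hα.le (hNoise W)
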